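/- Let d ≥ 1 and let K ⊆ ℝ^d be a symmetric convex set. Then the spectral set Λ(K) = {A ∈ S²ℝ^d : λ(A) ∈ K} is a convex subset of the space S²ℝ^d of real symmetric d×d matrices. -/

import Mathlib

/-!
The diagonal of a real symmetric matrix `A` in any orthonormal basis is the image of its
eigenvalue vector under a doubly stochastic matrix (the entrywise square of an orthogonal
matrix). By Birkhoff's theorem this diagonal is a convex combination of permutations of the
eigenvalue vector, so it lies in every symmetric convex set `K` containing that vector
(`diag_conj_mem`). For a convex combination `C = a A + b B`, diagonalize `C` orthogonally: the
eigenvalue vector of `C` is `a` times the diagonal of `A` plus `b` times the diagonal of `B`,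
both taken in the eigenbasis of `C`, hence it belongs to `K`.
-/

open Matrix Finset Pointwise

/-- The vector of eigenvalues of a real symmetric `d × d` matrix, listed in
non-increasing order (junk value `0` if the matrix is not symmetric). -/
noncomputable def eigVec {d : ℕ} (A : Matrix (Fin d) (Fin d) ℝ) : Fin d → ℝ :=
  if hA : A.IsHermitian then fun i => hA.eigenvalues (Tuple.sort hA.eigenvalues i.rev) else 0

/-- A set `K ⊆ ℝ^d` is symmetric if it is invariant under all coordinate permutations. -/
def IsSymmSet {d : ℕ} (K : Set (Fin d → ℝ)) : Prop :=
  ∀ σ : Equiv.Perm (Fin d), (fun p => p ∘ σ) '' K = K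

/-- The spectral set `Λ(K) = {A ∈ S²ℝ^d : λ(A) ∈ K}` of a set `K ⊆ ℝ^d`,
realized as the set of real symmetric matrices whose eigenvalue vector lies in `K`. -/
def SpectralSet {d : ℕ} (K : Set (Fin d → ℝ)) : Set (Matrix (Fin d) (Fin d) ℝ) :=
  {A | A.IsHermitian ∧ eigVec A ∈ K}

/-- Support function of a set of vectors, w.r.t. the standard inner product. -/
noncomputable def suppVec {d : ℕ} (K : Set (Fin d → ℝ)) (c : Fin d → ℝ) : ℝ :=
  sSup {t | ∃ p ∈ K, t = ∑ i, c i * p i}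

/-- Support function of a set of symmetric matrices, w.r.t. the Frobenius inner
product `⟨A,B⟩ = tr(AB)`. -/
noncomputable def suppMat {d : ℕ} (C : Set (Matrix (Fin d) (Fin d) ℝ))
    (B : Matrix (Fin d) (Fin d) ℝ) : ℝ :=
  sSup {t | ∃ A ∈ C, t = (A * B).trace}

lemma IsSymmSet.comp_mem_iff {d : ℕ} {K : Set (Fin d → ℝ)} (hK : IsSymmSet K)
    (σ : Equiv.Perm (Fin d)) (p : Fin d → ℝ) : p ∘ σ ∈ K ↔ p ∈ K := by
  have key : ∀ (τ : Equiv.Perm (Fin d)) (q : Fin d → ℝ), q ∈ K → q ∘ τ ∈ K := by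
    intro τ q hq
    rw [← hK τ]
    exact ⟨q, hq, rfl⟩
  refine ⟨fun h => ?_, key σ p⟩
  have := key σ⁻¹ _ h
  have e : (p ∘ σ) ∘ ⇑σ⁻¹ = p := by
    ext i
    simp
  rwa [e] at this

/-- For symmetric `K` the ordering of the eigenvalues is irrelevant. -/
lemma eigVec_mem_iff {d : ℕ} {K : Set (Fin d → ℝ)} (hK : IsSymmSet K)
    {A : Matrix (Fin d) (Fin d) ℝ} (hA : A.IsHermitian) :
    eigVec A ∈ K ↔ hA.eigenvalues ∈ K := by
  rw [← hK.comp_mem_iff (Fin.revPerm.trans (Tuple.sort hA.eigenvalues)) hA.eigenvalues]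
  have e : eigVec A = hA.eigenvalues ∘ (Fin.revPerm.trans (Tuple.sort hA.eigenvalues)) := by
    ext i
    rw [eigVec, dif_pos hA]
    rfl
  rw [e]

/-- By Birkhoff's theorem, `M *ᵥ p` is a convex combination of permutations of `p`. -/
lemma doublyStochastic_mulVec_mem {d : ℕ} {K : Set (Fin d → ℝ)} (hsymm : IsSymmSet K)
    (hconv : Convex ℝ K) {M : Matrix (Fin d) (Fin d) ℝ} (hM : M ∈ doublyStochastic ℝ (Fin d))
    {p : Fin d → ℝ} (hp : p ∈ K) : M *ᵥ p ∈ K := by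
  obtain ⟨w, hw, hw1, rfl⟩ := exists_eq_sum_perm_of_mem_doublyStochastic hM
  rw [Matrix.sum_mulVec]
  simp_rw [Matrix.smul_mulVec, Matrix.permMatrix_mulVec]
  exact hconv.sum_mem (fun σ _ => hw σ) hw1 fun σ _ => (hsymm.comp_mem_iff σ p).mpr hp

lemma sq_mem_doublyStochastic {d : ℕ} {W : Matrix (Fin d) (Fin d) ℝ}
    (hW : W ∈ unitaryGroup (Fin d) ℝ) :
    (of fun i j => W i j ^ 2) ∈ doublyStochastic ℝ (Fin d) := by
  rw [mem_doublyStochastic_iff_sum]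
  refine ⟨fun i j => sq_nonneg _, fun i => ?_, fun j => ?_⟩
  · have := congrFun (congrFun (mem_unitaryGroup_iff.mp hW) i) i
    simpa [mul_apply, star_apply, sq] using this
  · have := congrFun (congrFun (mem_unitaryGroup_iff'.mp hW) j) j
    simpa [mul_apply, star_apply, sq] using this

/-- The diagonal of `A` in any orthonormal basis lies in every symmetric convex set containing
the eigenvalues of `A`. -/
lemma diag_conj_mem {d : ℕ} {K : Set (Fin d → ℝ)} (hsymm : IsSymmSet K)
    (hconv : Convex ℝ K) {A : Matrix (Fin d) (Fin d) ℝ} (hA : A.IsHermitian)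
    (hAK : hA.eigenvalues ∈ K) (V : unitaryGroup (Fin d) ℝ) :
    (star (V : Matrix (Fin d) (Fin d) ℝ) * A * V).diag ∈ K := by
  set W : unitaryGroup (Fin d) ℝ := star V * hA.eigenvectorUnitary with hW
  have hconj : star (V : Matrix (Fin d) (Fin d) ℝ) * A * V
      = (W : Matrix (Fin d) (Fin d) ℝ) * diagonal hA.eigenvalues
        * star (W : Matrix (Fin d) (Fin d) ℝ) := by
    conv_lhs => rw [hA.spectral_theorem, Unitary.conjStarAlgAut_apply]
    simp [hW, mul_assoc]
  have := doublyStochastic_mulVec_mem hsymm hconv (sq_mem_doublyStochastic W.2) hAK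
  convert this using 1
  rw [hconj]
  ext i
  rw [diag_apply, mul_apply]
  simp only [mulVec, dotProduct, of_apply, mul_diagonal, star_apply, star_trivial]
  exact Finset.sum_congr rfl fun j _ => by ring

/-- For a symmetric convex set `K ⊆ ℝ^d`, the spectral set `Λ(K)`
is a convex subset of the space of symmetric matrices. -/
theorem convex_spectralSet {d : ℕ} (hd : 1 ≤ d) (K : Set (Fin d → ℝ))
    (hsymm : IsSymmSet K) (hconv : Convex ℝ K) :
    Convex ℝ (SpectralSet K) := by
  rintro A ⟨hA, hAK⟩ B ⟨hB, hBK⟩ a b ha hb hab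
  rw [eigVec_mem_iff hsymm hA] at hAK
  rw [eigVec_mem_iff hsymm hB] at hBK
  have hC : (a • A + b • B).IsHermitian := by
    rw [Matrix.IsHermitian, conjTranspose_add, conjTranspose_smul, conjTranspose_smul, hA.eq,
      hB.eq, star_trivial, star_trivial]
  refine ⟨hC, (eigVec_mem_iff hsymm hC).mpr ?_⟩
  set V := hC.eigenvectorUnitary with hV
  have hdiag : star (V : Matrix (Fin d) (Fin d) ℝ) * (a • A + b • B) * V
      = diagonal hC.eigenvalues := by
    have h := hC.conjStarAlgAut_star_eigenvectorUnitary
    rw [Unitary.conjStarAlgAut_star_apply] at h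
    exact h
  have heig : hC.eigenvalues = a • (star (V : Matrix (Fin d) (Fin d) ℝ) * A * V).diag
      + b • (star (V : Matrix (Fin d) (Fin d) ℝ) * B * V).diag := by
    rw [← diag_diagonal hC.eigenvalues, ← hdiag]
    simp [mul_add, add_mul]
  rw [heig]
  exact hconv (diag_conj_mem hsymm hconv hA hAK V) (diag_conj_mem hsymm hconv hB hBK V) ha hb hab
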